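/- There exists a constant C such that for all integers H ≥ 2, |F_2(H) − ρ_2 · 8 · H³| ≤ C · H² · (log H)². -/

import Mathlib

/-!
A vector `(a₀, a₁, a₂)` is non-Eisenstein iff the set of primes at which Eisenstein's conditions
hold is empty. Möbius inversion over the divisors of the product of these primes
(`sum_moebius_eisAll`) gives the number of non-Eisenstein vectors of height `≤ H` as
`∑_{n ≤ H} μ(n) A_n B_n C_n`, where for squarefree `n` the three factors count the `a₀` with `n ∣ a₀`
and `a₀ / n` coprime to `n`, the multiples `a₁` of `n`, and the `a₂` coprime to `n`
(`Fcount_eq_sum`). The range `n ≤ H` suffices since `n` divides `a₀`, and `a₀ ≠ 0` when `n > 1`.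

Another Möbius inversion shows that the integers coprime to `n` in `[-x, x]` number
`2 x φ(n) / n + O(d(n))` (`card_coprimeBox_approx`). So each summand is
`8 H³ μ(n) φ(n)² / n⁴ + O(H² d(n) / n)` (`term_approx`), and the errors add up to `O(H² log² H)`
because `∑_{n ≤ H} d(n) / n ≤ (∑_{n ≤ H} 1 / n)²` (`sum_card_divisors_div_le`). The series
`∑ μ(n) φ(n)² / n⁴` equals `1 - ρ₂` by its Euler product (`tsum_eisTerm`), and its tail beyond `H` is
at most `1 / H` (`eisTerm_tail`), which costs `O(H²)`.
-/

/-- `ρ_2 = 1 - ∏_p (1 - (p-1)^2/p^4)`, product over all primes. -/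
noncomputable def rho2 : ℝ :=
  1 - ∏' p : Nat.Primes, (1 - (((p : ℕ) : ℝ) - 1) ^ 2 / ((p : ℕ) : ℝ) ^ 4)

/-- `F_d(H)`: number of Eisenstein polynomials (monic or not) of degree `d`
and height at most `H`. -/
noncomputable def Fcount (d H : ℕ) : ℕ :=
  Nat.card {a : Fin (d + 1) → ℤ //
    (∀ i : Fin (d + 1), |a i| ≤ (H : ℤ)) ∧
    ∃ p : ℕ, p.Prime ∧ (∀ i : Fin (d + 1), i.val < d → (p : ℤ) ∣ a i) ∧
      ¬ ((p : ℤ) ^ 2 ∣ a 0) ∧ ¬ ((p : ℤ) ∣ a (Fin.last d))}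

/-! ### Integers coprime to `n` in an interval, and the divisor sum -/

open ArithmeticFunction in
lemma sum_divisors_moebius (n : ℕ) :
    ∑ d ∈ n.divisors, moebius d = if n = 1 then 1 else 0 := by
  rw [← coe_mul_zeta_apply, moebius_mul_coe_zeta, one_apply]

open ArithmeticFunction in
lemma totient_div_eq (n : ℕ) (hn : n ≠ 0) :
    (n.totient : ℝ) / n = ∑ d ∈ n.divisors, (moebius d : ℝ) / d := by
  have h := (sum_eq_iff_sum_mul_moebius_eq (R := ℝ) (f := fun k => (k.totient : ℝ))
    (g := fun k => (k : ℝ))).1 (fun k _ => by exact_mod_cast Nat.sum_totient k) n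
    (Nat.pos_of_ne_zero hn)
  rw [← h, Nat.sum_divisorsAntidiagonal (fun a b => (moebius a : ℝ) * (b : ℝ)), Finset.sum_div]
  refine Finset.sum_congr rfl fun d hd => ?_
  have hdn := Nat.dvd_of_mem_divisors hd
  have hd0 : (d : ℝ) ≠ 0 := by
    have := Nat.pos_of_mem_divisors hd
    positivity
  have hn0 : (n : ℝ) ≠ 0 := by exact_mod_cast hn
  rw [Nat.cast_div hdn hd0]
  field_simp

lemma card_multiples (M e : ℕ) (he : 0 < e) :
    ((Finset.Icc (-(M : ℤ)) M).filter (fun b => (e : ℤ) ∣ b)).card = 2 * (M / e) + 1 := by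
  have he' : (0 : ℤ) < e := by exact_mod_cast he
  have : (Finset.Icc (-(M : ℤ)) M).filter (fun b => (e : ℤ) ∣ b) =
      (Finset.Icc (-((M / e : ℕ) : ℤ)) ((M / e : ℕ) : ℤ)).image (fun b => (e : ℤ) * b) := by
    ext b
    simp only [Finset.mem_filter, Finset.mem_Icc, Finset.mem_image]
    constructor
    · rintro ⟨⟨h1, h2⟩, c, rfl⟩
      refine ⟨c, ⟨?_, ?_⟩, rfl⟩
      · have : -c ≤ (M : ℤ) / e := (Int.le_ediv_iff_mul_le he').2 (by linarith)
        push_cast; linarith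
      · have : c ≤ (M : ℤ) / e := (Int.le_ediv_iff_mul_le he').2 (by linarith)
        push_cast; linarith
    · rintro ⟨c, ⟨h1, h2⟩, rfl⟩
      push_cast at h1 h2
      have h3 := (Int.le_ediv_iff_mul_le he').1 h2
      have h4 := (Int.le_ediv_iff_mul_le (a := -c) he').1 (by linarith)
      exact ⟨⟨by linarith, by linarith⟩, dvd_mul_right _ _⟩
  rw [this, Finset.card_image_of_injective _ (mul_right_injective₀ he'.ne'), Int.card_Icc]
  omega

/-- The integers in `[-M, M]` that are coprime to `n`. -/
noncomputable def coprimeBox (n M : ℕ) : Finset ℤ :=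
  (Finset.Icc (-(M : ℤ)) M).filter (fun b => Int.gcd b n = 1)

open ArithmeticFunction in
lemma card_coprimeBox (n M : ℕ) (hn : n ≠ 0) :
    ((coprimeBox n M).card : ℝ) =
      ∑ e ∈ n.divisors, (moebius e : ℝ) * (2 * ((M / e : ℕ) : ℝ) + 1) := by
  have h1 : ((coprimeBox n M).card : ℤ) =
      ∑ e ∈ n.divisors, moebius e * (2 * ((M / e : ℕ) : ℤ) + 1) := by
    have key : ∀ b : ℤ, (if Int.gcd b n = 1 then (1 : ℤ) else 0) =
        ∑ e ∈ n.divisors, if (e : ℤ) ∣ b then moebius e else 0 := by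
      intro b
      have hg : Int.gcd b n ≠ 0 := by
        intro h
        rw [Int.gcd_eq_zero_iff] at h
        exact hn (by exact_mod_cast h.2)
      rw [← sum_divisors_moebius, ← Finset.sum_filter]
      refine Finset.sum_congr ?_ fun _ _ => rfl
      ext e
      rw [Finset.mem_filter, Nat.mem_divisors, Nat.mem_divisors, ← Int.natCast_dvd_natCast,
        Int.dvd_coe_gcd_iff, Int.natCast_dvd_natCast]
      tauto
    rw [coprimeBox, Finset.card_filter]
    push_cast
    rw [Finset.sum_congr rfl fun b _ => key b, Finset.sum_comm]
    refine Finset.sum_congr rfl fun e he => ?_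
    rw [← Finset.sum_filter, Finset.sum_const, card_multiples M e (Nat.pos_of_mem_divisors he)]
    simp only [nsmul_eq_mul]
    push_cast
    ring
  have h2 := congrArg (fun z : ℤ => (z : ℝ)) h1
  push_cast at h2 ⊢
  exact h2

lemma abs_two_floor_add_one_sub (M e : ℕ) (he : 0 < e) :
    |2 * ((M / e : ℕ) : ℝ) + 1 - 2 * ((M : ℝ) / e)| ≤ 1 := by
  have he' : (0 : ℝ) < e := by exact_mod_cast he
  have h1 : ((M / e : ℕ) : ℝ) ≤ (M : ℝ) / e := Nat.cast_div_le
  have h2 : (M : ℝ) / e ≤ ((M / e : ℕ) : ℝ) + 1 := by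
    rw [div_le_iff₀ he']
    have := (Nat.lt_mul_div_succ M he).le
    calc (M : ℝ) ≤ ((e * (M / e + 1) : ℕ) : ℝ) := by exact_mod_cast this
      _ = _ := by push_cast; ring
  rw [abs_le]
  constructor <;> linarith

open ArithmeticFunction in
/-- Counting integers coprime to `n` in `[-H/k, H/k]`. Allowing the rounded bound `H / k`
costs nothing because nested integer divisions compose exactly. -/
lemma card_coprimeBox_approx (n k H : ℕ) (hn : n ≠ 0) (hk : k ≠ 0) :
    |((coprimeBox n (H / k)).card : ℝ) - 2 * ((H : ℝ) / k) * (n.totient / n)| ≤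
      n.divisors.card := by
  rw [card_coprimeBox n _ hn, totient_div_eq n hn, Finset.mul_sum, ← Finset.sum_sub_distrib]
  refine (Finset.abs_sum_le_sum_abs _ _).trans ?_
  rw [Finset.card_eq_sum_ones, Nat.cast_sum]
  refine Finset.sum_le_sum fun e he => ?_
  have he0 := Nat.pos_of_mem_divisors he
  have h1 := abs_two_floor_add_one_sub H (k * e) (by positivity)
  have h2 : |(moebius e : ℝ)| ≤ 1 := by exact_mod_cast abs_moebius_le_one
  have h3 : (moebius e : ℝ) * (2 * ((H / k / e : ℕ) : ℝ) + 1) -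
      2 * ((H : ℝ) / k) * ((moebius e : ℝ) / e) =
      (moebius e : ℝ) * (2 * ((H / (k * e) : ℕ) : ℝ) + 1 - 2 * ((H : ℝ) / ((k * e : ℕ) : ℝ))) := by
    rw [Nat.div_div_eq_div_mul]
    have : (e : ℝ) ≠ 0 := by positivity
    have : (k : ℝ) ≠ 0 := by positivity
    push_cast
    field_simp
  rw [h3, abs_mul]
  simpa using mul_le_mul h2 h1 (abs_nonneg _) zero_le_one

lemma sum_inv_le (H : ℕ) : ∑ n ∈ Finset.Icc 1 H, (1 : ℝ) / n ≤ 1 + Real.log H := by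
  have := harmonic_le_one_add_log H
  rw [harmonic_eq_sum_Icc] at this
  push_cast at this
  simpa [one_div] using this

lemma sum_card_divisors_div_le (H : ℕ) :
    ∑ n ∈ Finset.Icc 1 H, (n.divisors.card : ℝ) / n ≤ (1 + Real.log H) ^ 2 := by
  have h0 : 0 ≤ ∑ n ∈ Finset.Icc 1 H, (1 : ℝ) / n := Finset.sum_nonneg fun _ _ => by positivity
  refine le_trans ?_ (pow_le_pow_left₀ h0 (sum_inv_le H) 2)
  rw [sq, Finset.sum_mul_sum, ← Finset.sum_product']
  have := Finset.sum_fiberwise_le_sum_of_sum_fiber_nonneg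
    (s := Finset.Icc 1 H ×ˢ Finset.Icc 1 H) (t := Finset.Icc 1 H)
    (g := fun x : ℕ × ℕ => x.1 * x.2) (f := fun x : ℕ × ℕ => (1 : ℝ) / x.1 * (1 / x.2))
    (fun _ _ => Finset.sum_nonneg fun _ _ => by positivity)
  refine le_trans (le_of_eq (Finset.sum_congr rfl fun n hn => ?_)) this
  rw [Finset.mem_Icc] at hn
  have hset : (Finset.Icc 1 H ×ˢ Finset.Icc 1 H).filter (fun x : ℕ × ℕ => x.1 * x.2 = n) =
      n.divisorsAntidiagonal := by
    ext ⟨a, b⟩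
    simp only [Finset.mem_filter, Finset.mem_product, Finset.mem_Icc, Nat.mem_divisorsAntidiagonal]
    constructor
    · rintro ⟨_, h⟩
      exact ⟨h, by omega⟩
    · rintro ⟨h, _⟩
      have ha : 0 < a := Nat.pos_of_ne_zero (by rintro rfl; omega)
      have hb : 0 < b := Nat.pos_of_ne_zero (by rintro rfl; omega)
      have := Nat.le_mul_of_pos_right a hb
      have := Nat.le_mul_of_pos_left b ha
      exact ⟨⟨⟨ha, by omega⟩, hb, by omega⟩, h⟩
  rw [hset, Finset.sum_congr rfl (g := fun _ => (1 : ℝ) / n),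
    Nat.sum_divisorsAntidiagonal (fun _ _ => (1 : ℝ) / n), Finset.sum_const]
  · simp [div_eq_mul_inv]
  · rintro ⟨a, b⟩ hx
    rw [← (Nat.mem_divisorsAntidiagonal.1 hx).1]
    push_cast
    rw [one_div_mul_one_div]

/-! ### The Dirichlet series and its Euler product -/

/-- The summand `μ(n) φ(n)² / n⁴` of the Dirichlet series whose Euler product is `1 - ρ₂`. -/
noncomputable def eisTerm (n : ℕ) : ℝ :=
  (ArithmeticFunction.moebius n : ℝ) * (n.totient : ℝ) ^ 2 / (n : ℝ) ^ 4

open ArithmeticFunction in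
lemma abs_eisTerm_le (n : ℕ) : ‖eisTerm n‖ ≤ 1 / (n : ℝ) ^ 2 := by
  rcases Nat.eq_zero_or_pos n with rfl | hn
  · simp [eisTerm]
  have h2 : |(moebius n : ℝ)| ≤ 1 := by exact_mod_cast abs_moebius_le_one
  have hn' : (0 : ℝ) < n := by exact_mod_cast hn
  have h3 : (n.totient : ℝ) ≤ n := by exact_mod_cast Nat.totient_le n
  rw [Real.norm_eq_abs, eisTerm, abs_div, abs_mul, abs_of_nonneg (by positivity : 0 ≤ (n.totient : ℝ) ^ 2),
    abs_of_nonneg (by positivity : 0 ≤ (n : ℝ) ^ 4), div_le_div_iff₀ (by positivity) (by positivity)]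
  have h4 : (n.totient : ℝ) ^ 2 ≤ (n : ℝ) ^ 2 := pow_le_pow_left₀ (by positivity) h3 2
  calc |(moebius n : ℝ)| * (n.totient : ℝ) ^ 2 * (n : ℝ) ^ 2
      ≤ 1 * (n : ℝ) ^ 2 * (n : ℝ) ^ 2 := by gcongr
    _ = 1 * (n : ℝ) ^ 4 := by ring

lemma summable_eisTerm : Summable (fun n => ‖eisTerm n‖) :=
  Summable.of_nonneg_of_le (fun _ => norm_nonneg _) abs_eisTerm_le
    (Real.summable_one_div_nat_pow.2 one_lt_two)

open ArithmeticFunction in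
lemma tsum_eisTerm : ∑' n, eisTerm n = 1 - rho2 := by
  have h := EulerProduct.eulerProduct_hasProd (f := eisTerm) (by simp [eisTerm])
    (fun {m n} hmn => by
      simp only [eisTerm, isMultiplicative_moebius.map_mul_of_coprime hmn,
        Nat.totient_mul hmn]
      push_cast
      rw [div_mul_div_comm]
      ring)
    summable_eisTerm (by simp [eisTerm])
  rw [← h.tprod_eq, rho2, sub_sub_cancel]
  refine tprod_congr fun p => ?_
  have hp := p.2
  rw [tsum_eq_sum (s := Finset.range 2)]
  · have h1 : (1 : ℕ) ≤ (p : ℕ) := hp.one_lt.le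
    simp [Finset.sum_range_succ, eisTerm, moebius_apply_prime hp, Nat.totient_prime hp,
      Nat.cast_sub h1]
    ring
  · intro e he
    have he' : 2 ≤ e := by simpa [Nat.succ_le_iff] using he
    have : moebius ((p : ℕ) ^ e) = 0 := by
      rw [moebius_apply_prime_pow hp (by omega), if_neg (by omega)]
    simp [eisTerm, this]

/-- Truncating the Dirichlet series at `H` costs at most `1 / H`. -/
lemma eisTerm_tail (H : ℕ) (hH : 1 ≤ H) :
    |∑ n ∈ Finset.Icc 1 H, eisTerm n - (1 - rho2)| ≤ 1 / H := by
  have hs : Summable eisTerm := summable_eisTerm.of_norm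
  have h1 := hs.sum_add_tsum_nat_add (H + 1)
  have h2 : ∑ n ∈ Finset.range (H + 1), eisTerm n = ∑ n ∈ Finset.Icc 1 H, eisTerm n := by
    rw [Nat.range_succ_eq_Icc_zero, ← Finset.sum_Ioc_add_eq_sum_Icc (Nat.zero_le H)]
    simp [eisTerm, ← Finset.Icc_succ_left_eq_Ioc]
  rw [← tsum_eisTerm, ← h1, h2, sub_add_cancel_left, abs_neg]
  have hs' := (summable_nat_add_iff (H + 1)).2 summable_eisTerm
  refine (norm_tsum_le_tsum_norm hs').trans ?_
  refine Real.tsum_le_of_sum_range_le (fun _ => norm_nonneg _) fun n => ?_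
  have hH' : (0 : ℝ) < H := by exact_mod_cast hH
  have h3 : ∑ i ∈ Finset.range n, ‖eisTerm (i + (H + 1))‖ ≤ 1 / (H : ℝ) - 1 / ((n : ℝ) + H) := by
    induction n with
    | zero => simp
    | succ n ih =>
      rw [Finset.sum_range_succ]
      have h4 := abs_eisTerm_le (n + (H + 1))
      have h5 : 1 / ((n + (H + 1) : ℕ) : ℝ) ^ 2 ≤ 1 / ((n : ℝ) + H) - 1 / (((n + 1 : ℕ) : ℝ) + H) := by
        push_cast
        rw [div_sub_div _ _ (by positivity) (by positivity),
          div_le_div_iff₀ (by positivity) (by positivity)]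
        nlinarith [(Nat.cast_nonneg n : (0 : ℝ) ≤ n)]
      linarith
  have : 0 ≤ 1 / ((n : ℝ) + H) := by positivity
  linarith

/-! ### Möbius inversion over Eisenstein primes -/

/-- `a` satisfies Eisenstein's conditions at the prime `p`. -/
def EisAt (a : Fin 3 → ℤ) (p : ℕ) : Prop :=
  ((p : ℤ) ∣ a 0 ∧ (p : ℤ) ∣ a 1) ∧ ¬ ((p : ℤ) ^ 2 ∣ a 0) ∧ ¬ ((p : ℤ) ∣ a 2)

/-- A condition constraining each coefficient separately which, for squarefree `n`, says that `a`
satisfies Eisenstein's conditions at every prime factor of `n` (see `eisAll_iff`). It also behaves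
well for `a 0 = 0`, where it holds only if `n = 1`. -/
def EisAll (a : Fin 3 → ℤ) (n : ℕ) : Prop :=
  ((n : ℤ) ∣ a 0 ∧ Int.gcd (a 0 / n) n = 1) ∧ (n : ℤ) ∣ a 1 ∧ Int.gcd (a 2) n = 1

lemma int_gcd_eq_one_iff (b : ℤ) (n : ℕ) :
    Int.gcd b n = 1 ↔ ∀ p : ℕ, p.Prime → p ∣ n → ¬ (p : ℤ) ∣ b := by
  rw [Nat.eq_one_iff_not_exists_prime_dvd]
  refine forall_congr' fun p => forall_congr' fun hp => ?_
  rw [← Int.natCast_dvd_natCast, Int.dvd_coe_gcd_iff, Int.natCast_dvd_natCast]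
  tauto

lemma squarefree_dvd_iff {n : ℕ} (hn : Squarefree n) (x : ℤ) :
    (n : ℤ) ∣ x ↔ ∀ p : ℕ, p.Prime → p ∣ n → (p : ℤ) ∣ x := by
  constructor
  · intro h p _ hpn
    exact (Int.natCast_dvd_natCast.2 hpn).trans h
  · intro h
    rw [Int.natCast_dvd, ← Nat.prod_primeFactors_of_squarefree hn]
    refine Finset.prod_primes_dvd _ (fun p hp => (Nat.prime_of_mem_primeFactors hp).prime)
      fun p hp => ?_
    exact Int.natCast_dvd.1 (h p (Nat.prime_of_mem_primeFactors hp) (Nat.dvd_of_mem_primeFactors hp))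

lemma sq_dvd_iff {n : ℕ} (hn : Squarefree n) {x : ℤ} (hx : (n : ℤ) ∣ x) {p : ℕ} (hp : p.Prime)
    (hpn : p ∣ n) : (p : ℤ) ^ 2 ∣ x ↔ (p : ℤ) ∣ x / n := by
  obtain ⟨b, rfl⟩ := hx
  obtain ⟨m, rfl⟩ := hpn
  have hp0 : (p : ℤ) ≠ 0 := by exact_mod_cast hp.ne_zero
  have hn0 : ((p * m : ℕ) : ℤ) ≠ 0 := by exact_mod_cast hn.ne_zero
  have hcop : Nat.Coprime p m := (Nat.squarefree_mul_iff.1 hn).1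
  rw [Int.mul_ediv_cancel_left _ hn0]
  push_cast
  rw [sq, mul_assoc, mul_dvd_mul_iff_left hp0]
  exact ⟨fun h => hcop.isCoprime.dvd_of_dvd_mul_left h, fun h => h.mul_left _⟩

lemma eisAll_iff {n : ℕ} (hn : Squarefree n) (a : Fin 3 → ℤ) :
    EisAll a n ↔ ∀ p : ℕ, p.Prime → p ∣ n → EisAt a p := by
  unfold EisAll EisAt
  rw [int_gcd_eq_one_iff, int_gcd_eq_one_iff, squarefree_dvd_iff hn (a 1)]
  constructor
  · rintro ⟨⟨h0, h0'⟩, h1, h2⟩ p hp hpn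
    exact ⟨⟨(squarefree_dvd_iff hn _).1 h0 p hp hpn, h1 p hp hpn⟩,
      fun h => h0' p hp hpn ((sq_dvd_iff hn h0 hp hpn).1 h), h2 p hp hpn⟩
  · intro h
    have h0 := (squarefree_dvd_iff hn (a 0)).2 fun p hp hpn => (h p hp hpn).1.1
    exact ⟨⟨h0, fun p hp hpn h' => (h p hp hpn).2.1 ((sq_dvd_iff hn h0 hp hpn).2 h')⟩,
      fun p hp hpn => (h p hp hpn).1.2, fun p hp hpn => (h p hp hpn).2.2⟩

open ArithmeticFunction in
open Classical in
/-- Möbius inversion: the squarefree `n` with `EisAll a n` are exactly the divisors of the product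
of all primes at which `a` is Eisenstein. That product divides `a 0`, so `n ≤ H` loses nothing. -/
lemma sum_moebius_eisAll (H : ℕ) (hH : 1 ≤ H) (a : Fin 3 → ℤ) (ha : |a 0| ≤ H) :
    ∑ n ∈ Finset.Icc 1 H, (if EisAll a n then moebius n else 0) =
      if ∃ p : ℕ, p.Prime ∧ EisAt a p then 0 else 1 := by
  set S := (Finset.Icc 1 H).filter (fun p => p.Prime ∧ EisAt a p) with hS
  have hSp : ∀ p ∈ S, p.Prime := fun p hp => (Finset.mem_filter.1 hp).2.1
  set P := ∏ p ∈ S, p with hP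
  have hP0 : P ≠ 0 := Finset.prod_ne_zero_iff.2 fun p hp => (hSp p hp).ne_zero
  have hmem : ∀ p : ℕ, p.Prime → EisAt a p → p ∈ S := by
    intro p hp he
    have h0 : a 0 ≠ 0 := fun h => he.2.1 (by simp [h])
    have hle : (p : ℤ) ≤ |a 0| :=
      Int.le_of_dvd (abs_pos.2 h0) ((dvd_abs _ _).2 he.1.1)
    exact Finset.mem_filter.2 ⟨Finset.mem_Icc.2 ⟨hp.one_lt.le, by omega⟩, hp, he⟩
  have hPH : P ≤ H := by
    by_cases h0 : a 0 = 0
    · have : S = ∅ := Finset.eq_empty_of_forall_notMem fun p hp =>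
        (Finset.mem_filter.1 hp).2.2.2.1 (by simp [h0])
      simp [hP, this, hH]
    · have : P ∣ (a 0).natAbs := Finset.prod_primes_dvd _ (fun p hp => (hSp p hp).prime)
        fun p hp => Int.natCast_dvd.1 (Finset.mem_filter.1 hp).2.2.1.1
      have := Nat.le_of_dvd (Int.natAbs_pos.2 h0) this
      rw [Int.abs_eq_natAbs] at ha
      omega
  have hfac : P.primeFactors = S := Nat.primeFactors_prod hSp
  have hPsq : Squarefree P := by
    refine Finset.squarefree_prod_of_pairwise_isCoprime (fun p hp q hq hpq => ?_)
      fun p hp => (hSp p hp).prime.squarefree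
    exact Nat.coprime_iff_isRelPrime.1 ((Nat.coprime_primes (hSp p hp) (hSp q hq)).2 hpq)
  have hstep : ∑ n ∈ Finset.Icc 1 H, (if EisAll a n then moebius n else 0) =
      ∑ n ∈ P.divisors, moebius n := by
    rw [← Finset.sum_filter]
    symm
    refine Finset.sum_subset_zero_on_sdiff (fun n hn => ?_) (fun n hn => ?_) fun _ _ => rfl
    · have hd := Nat.dvd_of_mem_divisors hn
      have hnsq := hPsq.squarefree_of_dvd hd
      refine Finset.mem_filter.2 ⟨Finset.mem_Icc.2 ⟨Nat.pos_of_mem_divisors hn,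
        (Nat.le_of_dvd (Nat.pos_of_ne_zero hP0) hd).trans hPH⟩, ?_⟩
      rw [eisAll_iff hnsq]
      intro p hp hpn
      have : p ∈ S := hfac ▸ Nat.mem_primeFactors.2 ⟨hp, hpn.trans hd, hP0⟩
      exact (Finset.mem_filter.1 this).2.2
    · rw [Finset.mem_sdiff, Finset.mem_filter, Nat.mem_divisors] at hn
      obtain ⟨⟨_, he⟩, hnd⟩ := hn
      refine moebius_eq_zero_of_not_squarefree fun hnsq => hnd ⟨?_, hP0⟩
      rw [← Nat.prod_primeFactors_of_squarefree hnsq]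
      refine Finset.prod_dvd_prod_of_subset _ _ _ fun p hp => ?_
      exact hmem p (Nat.prime_of_mem_primeFactors hp) ((eisAll_iff hnsq a).1 he p
        (Nat.prime_of_mem_primeFactors hp) (Nat.dvd_of_mem_primeFactors hp))
  rw [hstep, sum_divisors_moebius]
  by_cases hex : ∃ p : ℕ, p.Prime ∧ EisAt a p
  · rw [if_pos hex, if_neg]
    intro h1
    obtain ⟨p, hp, he⟩ := hex
    have : p ∣ P := Finset.dvd_prod_of_mem _ (hmem p hp he)
    exact hp.one_lt.ne' (Nat.dvd_one.1 (h1 ▸ this))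
  · rw [if_neg hex, if_pos]
    have : S = ∅ := Finset.eq_empty_of_forall_notMem fun p hp =>
      hex ⟨p, (Finset.mem_filter.1 hp).2⟩
    simp [hP, this]

/-! ### Counting coefficient vectors -/

/-- The coefficient vectors of height at most `H`. -/
noncomputable def hBox (H : ℕ) : Finset (Fin 3 → ℤ) :=
  Fintype.piFinset fun _ => Finset.Icc (-(H : ℤ)) H

open Classical in
lemma Fcount_two_eq (H : ℕ) :
    Fcount 2 H = ((hBox H).filter (fun a => ∃ p : ℕ, p.Prime ∧ EisAt a p)).card := by
  refine Nat.subtype_card _ fun a => ?_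
  rw [Finset.mem_filter, hBox, Fintype.mem_piFinset]
  refine and_congr (forall_congr' fun i => by rw [Finset.mem_Icc, abs_le])
    (exists_congr fun p => and_congr_right fun _ => ?_)
  simp only [EisAt, Fin.forall_fin_succ]
  simp

lemma card_dvd_coprime (H n : ℕ) (hn : 0 < n) :
    ((Finset.Icc (-(H : ℤ)) H).filter (fun b => (n : ℤ) ∣ b ∧ Int.gcd (b / n) n = 1)).card =
      (coprimeBox n (H / n)).card := by
  have hn' : (0 : ℤ) < n := by exact_mod_cast hn
  symm
  refine Finset.card_bij (fun b _ => (n : ℤ) * b) ?_ ?_ ?_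
  · intro b hb
    simp only [coprimeBox, Finset.mem_filter, Finset.mem_Icc] at hb ⊢
    obtain ⟨⟨h1, h2⟩, h3⟩ := hb
    push_cast at h1 h2
    have h4 := (Int.le_ediv_iff_mul_le hn').1 h2
    have h5 := (Int.le_ediv_iff_mul_le (a := -b) hn').1 (by linarith)
    refine ⟨⟨by linarith, by linarith⟩, dvd_mul_right _ _, ?_⟩
    rwa [Int.mul_ediv_cancel_left _ hn'.ne']
  · intro b _ c _ h
    exact mul_left_cancel₀ hn'.ne' h
  · intro c hc
    simp only [coprimeBox, Finset.mem_filter, Finset.mem_Icc] at hc ⊢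
    obtain ⟨⟨h1, h2⟩, ⟨b, rfl⟩, h3⟩ := hc
    rw [Int.mul_ediv_cancel_left _ hn'.ne'] at h3
    refine ⟨b, ⟨⟨?_, ?_⟩, h3⟩, rfl⟩
    · have : -b ≤ (H : ℤ) / n := (Int.le_ediv_iff_mul_le hn').2 (by linarith)
      push_cast; linarith
    · have : b ≤ (H : ℤ) / n := (Int.le_ediv_iff_mul_le hn').2 (by linarith)
      push_cast; linarith

open Classical in
lemma card_eisAll (H n : ℕ) (hn : 0 < n) :
    ((hBox H).filter (fun a => EisAll a n)).card =
      (coprimeBox n (H / n)).card * (2 * (H / n) + 1) * (coprimeBox n H).card := by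
  have : (hBox H).filter (fun a => EisAll a n) = Fintype.piFinset
      ![(Finset.Icc (-(H : ℤ)) H).filter (fun b => (n : ℤ) ∣ b ∧ Int.gcd (b / n) n = 1),
        (Finset.Icc (-(H : ℤ)) H).filter (fun b => (n : ℤ) ∣ b), coprimeBox n H] := by
    ext a
    rw [Finset.mem_filter]
    simp only [hBox, Fintype.mem_piFinset, Fin.forall_fin_succ, EisAll, coprimeBox]
    simp
    tauto
  rw [this, Fintype.card_piFinset, Fin.prod_univ_three, ← card_dvd_coprime H n hn,
    ← card_multiples H n hn]
  rfl

open ArithmeticFunction in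
/-- Summing the pointwise Möbius identity over the box counts the non-Eisenstein vectors. -/
lemma Fcount_eq_sum (H : ℕ) (hH : 1 ≤ H) :
    (Fcount 2 H : ℝ) = (2 * H + 1 : ℝ) ^ 3 - ∑ n ∈ Finset.Icc 1 H, (moebius n : ℝ) *
      ((coprimeBox n (H / n)).card * (2 * ((H / n : ℕ) : ℝ) + 1) * (coprimeBox n H).card) := by
  classical
  have hbox : (hBox H).card = (2 * H + 1) ^ 3 := by
    rw [hBox, Fintype.card_piFinset, Fin.prod_univ_three, Int.card_Icc]
    have : ((H : ℤ) + 1 - -(H : ℤ)).toNat = 2 * H + 1 := by omega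
    rw [this]
    ring
  have h1 : (Fcount 2 H : ℤ) = (2 * H + 1) ^ 3 - ∑ n ∈ Finset.Icc 1 H, moebius n *
      ((coprimeBox n (H / n)).card * (2 * ((H / n : ℕ) : ℤ) + 1) * (coprimeBox n H).card) := by
    have h2 : ∑ n ∈ Finset.Icc 1 H, moebius n *
        ((coprimeBox n (H / n)).card * (2 * ((H / n : ℕ) : ℤ) + 1) * (coprimeBox n H).card) =
        ∑ a ∈ hBox H, if ∃ p : ℕ, p.Prime ∧ EisAt a p then (0 : ℤ) else 1 := by
      have hpt : ∀ a ∈ hBox H, ∑ n ∈ Finset.Icc 1 H, (if EisAll a n then moebius n else 0) =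
          if ∃ p : ℕ, p.Prime ∧ EisAt a p then (0 : ℤ) else 1 := fun a ha =>
        sum_moebius_eisAll H hH a (abs_le.2 (Finset.mem_Icc.1 (Fintype.mem_piFinset.1 ha 0)))
      rw [← Finset.sum_congr rfl hpt, Finset.sum_comm]
      refine Finset.sum_congr rfl fun n hn => ?_
      rw [← Finset.sum_filter, Finset.sum_const, card_eisAll H n (Finset.mem_Icc.1 hn).1]
      simp only [nsmul_eq_mul]
      push_cast
      ring
    have h3 : ((hBox H).card : ℤ) = (2 * H + 1) ^ 3 := by exact_mod_cast hbox
    rw [h2, Fcount_two_eq, ← h3, Finset.card_filter, Finset.card_eq_sum_ones, eq_sub_iff_add_eq]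
    push_cast
    rw [← Finset.sum_add_distrib]
    refine Finset.sum_congr rfl fun a _ => ?_
    split_ifs <;> simp
  have h2 := congrArg (fun z : ℤ => (z : ℝ)) h1
  push_cast at h2 ⊢
  exact h2

/-! ### Error terms and conclusion -/

open ArithmeticFunction in
/-- Each of the three factors is replaced in turn by its main term; the factor counting `a₀`
contributes the dominant error `d(n) · H² / n`. -/
lemma term_approx (H n : ℕ) (hn : 1 ≤ n) (hnH : n ≤ H) :
    |(moebius n : ℝ) * ((coprimeBox n (H / n)).card * (2 * ((H / n : ℕ) : ℝ) + 1) *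
      (coprimeBox n H).card) - 8 * (H : ℝ) ^ 3 * eisTerm n| ≤
      19 * (H : ℝ) ^ 2 * (n.divisors.card / n) := by
  have hn' : (1 : ℝ) ≤ n := by exact_mod_cast hn
  have hn0 : (0 : ℝ) < n := by linarith
  have hnH' : (n : ℝ) ≤ H := by exact_mod_cast hnH
  have hH0 : (0 : ℝ) < H := by linarith
  set D : ℝ := (n.divisors.card : ℝ) with hD
  have hD1 : 1 ≤ D := by
    have : 0 < n.divisors.card := Finset.card_pos.2 ⟨1, by simp; omega⟩
    rw [hD]; exact_mod_cast this
  set t : ℝ := (n.totient : ℝ) / n with ht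
  have ht0 : 0 ≤ t := by positivity
  have ht1 : t ≤ 1 := by
    rw [ht, div_le_one hn0]; exact_mod_cast Nat.totient_le n
  set x : ℝ := (H : ℝ) / n with hx
  have hx1 : 1 ≤ x := by rw [hx, one_le_div hn0]; exact hnH'
  have hxH : x ≤ H := div_le_self hH0.le hn'
  have hA := card_coprimeBox_approx n n H (by omega) (by omega)
  have hC := card_coprimeBox_approx n 1 H (by omega) one_ne_zero
  have hB := abs_two_floor_add_one_sub H n hn
  rw [Nat.div_one, Nat.cast_one, div_one] at hC
  rw [← hx, ← ht, ← hD] at hA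
  rw [← ht, ← hD] at hC
  rw [← hx] at hB
  set A : ℝ := ((coprimeBox n (H / n)).card : ℝ)
  set B : ℝ := 2 * ((H / n : ℕ) : ℝ) + 1 with hBdef
  set K : ℝ := ((coprimeBox n H).card : ℝ) with hK
  have hB0 : 0 ≤ B := by positivity
  have hK0 : 0 ≤ K := by positivity
  have hB3 : B ≤ 3 * x := by linarith [(abs_le.1 hB).2]
  have hK3 : K ≤ 3 * H := by
    have h1 : (coprimeBox n H).card ≤ 2 * H + 1 := by
      refine (Finset.card_filter_le _ _).trans ?_
      rw [Int.card_Icc]; omega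
    have h2 : K ≤ 2 * H + 1 := by rw [hK]; exact_mod_cast h1
    linarith
  have hmain : 8 * (H : ℝ) ^ 3 * eisTerm n =
      (moebius n : ℝ) * ((2 * x * t) * (2 * x) * (2 * H * t)) := by
    rw [eisTerm, hx, ht]
    field_simp
    ring
  have hmu : |(moebius n : ℝ)| ≤ 1 := by exact_mod_cast abs_moebius_le_one
  rw [hmain, ← mul_sub, abs_mul]
  have hsplit : A * B * K - (2 * x * t) * (2 * x) * (2 * H * t) =
      (A - 2 * x * t) * (B * K) + (B - 2 * x) * (2 * x * t * K) +
        (K - 2 * H * t) * (2 * x * t * (2 * x)) := by ring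
  have e1 : |(A - 2 * x * t) * (B * K)| ≤ D * (3 * x * (3 * H)) := by
    rw [abs_mul, abs_of_nonneg (mul_nonneg hB0 hK0)]
    gcongr
  have e2 : |(B - 2 * x) * (2 * x * t * K)| ≤ 1 * (2 * x * 1 * (3 * H)) := by
    rw [abs_mul, abs_of_nonneg (by positivity : 0 ≤ 2 * x * t * K)]
    gcongr
  have e3 : |(K - 2 * H * t) * (2 * x * t * (2 * x))| ≤ D * (2 * x * 1 * (2 * H)) := by
    rw [abs_mul, abs_of_nonneg (by positivity : 0 ≤ 2 * x * t * (2 * x))]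
    gcongr
  have e4 : |A * B * K - (2 * x * t) * (2 * x) * (2 * H * t)| ≤ 19 * (H * x * D) := by
    rw [hsplit]
    refine (abs_add_three _ _ _).trans ?_
    have : (H : ℝ) * x ≤ H * x * D := le_mul_of_one_le_right (by positivity) hD1
    linarith
  calc |(moebius n : ℝ)| * |A * B * K - (2 * x * t) * (2 * x) * (2 * H * t)|
      ≤ 1 * (19 * (H * x * D)) := by gcongr
    _ = 19 * (H : ℝ) ^ 2 * (D / n) := by rw [hx]; ring

theorem eisenstein_count_asymptotic_deg_two :
    ∃ C : ℝ, ∀ H : ℕ, 2 ≤ H →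
      |(Fcount 2 H : ℝ) - rho2 * 8 * (H : ℝ) ^ 3| ≤ C * (H : ℝ) ^ 2 * (Real.log H) ^ 2 := by
  -- The constant is fixed by `log H ≥ log 2 ≥ 1/2`, which gives `1 + log H ≤ 3 log H`:
  -- `19 * 9` for the divisor sum and `4 * (19 + 8)` for the two errors of size `O(H²)`.
  refine ⟨279, fun H hH => ?_⟩
  have hH' : (2 : ℝ) ≤ H := by exact_mod_cast hH
  have hH0 : (0 : ℝ) < H := by linarith
  have hlog : 1 / 2 ≤ Real.log H := by
    have := Real.log_le_log (by norm_num) hH'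
    linarith [Real.log_two_gt_d9]
  set G := ∑ n ∈ Finset.Icc 1 H, (ArithmeticFunction.moebius n : ℝ) *
      ((coprimeBox n (H / n)).card * (2 * ((H / n : ℕ) : ℝ) + 1) * (coprimeBox n H).card) with hG
  set E := ∑ n ∈ Finset.Icc 1 H, eisTerm n with hE
  have h1 : |G - 8 * (H : ℝ) ^ 3 * E| ≤ 19 * (H : ℝ) ^ 2 * (1 + Real.log H) ^ 2 := by
    rw [hG, hE, Finset.mul_sum, ← Finset.sum_sub_distrib]
    refine (Finset.abs_sum_le_sum_abs _ _).trans ?_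
    refine (Finset.sum_le_sum fun n hn =>
      term_approx H n (Finset.mem_Icc.1 hn).1 (Finset.mem_Icc.1 hn).2).trans ?_
    rw [← Finset.mul_sum]
    exact mul_le_mul_of_nonneg_left (sum_card_divisors_div_le H) (by positivity)
  have h2 : |8 * (H : ℝ) ^ 3 * (E - (1 - rho2))| ≤ 8 * (H : ℝ) ^ 2 := by
    rw [abs_mul, abs_of_nonneg (by positivity)]
    calc 8 * (H : ℝ) ^ 3 * |E - (1 - rho2)| ≤ 8 * (H : ℝ) ^ 3 * (1 / H) := by
          gcongr
          exact eisTerm_tail H (by omega)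
      _ = 8 * (H : ℝ) ^ 2 := by field_simp
  have h3 : |(2 * H + 1 : ℝ) ^ 3 - 8 * (H : ℝ) ^ 3| ≤ 19 * (H : ℝ) ^ 2 := by
    rw [abs_of_nonneg (by ring_nf; positivity)]
    nlinarith
  have h4 : (Fcount 2 H : ℝ) - rho2 * 8 * (H : ℝ) ^ 3 = ((2 * H + 1 : ℝ) ^ 3 - 8 * (H : ℝ) ^ 3) +
      -(G - 8 * (H : ℝ) ^ 3 * E) + -(8 * (H : ℝ) ^ 3 * (E - (1 - rho2))) := by
    rw [Fcount_eq_sum H (by omega)]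
    ring
  rw [h4]
  refine (abs_add_three _ _ _).trans ?_
  rw [abs_neg, abs_neg]
  have h5 : (1 + Real.log H) ^ 2 ≤ 9 * Real.log H ^ 2 := by nlinarith
  have h6 : 1 ≤ 4 * Real.log H ^ 2 := by nlinarith
  have h7 : (H : ℝ) ^ 2 * (1 + Real.log H) ^ 2 ≤ (H : ℝ) ^ 2 * (9 * Real.log H ^ 2) := by gcongr
  have h8 : (H : ℝ) ^ 2 * 1 ≤ (H : ℝ) ^ 2 * (4 * Real.log H ^ 2) := by gcongr
  linarith
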